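/- Let r be an even positive integer, n = 2r, f : F → 𝔽₂ defined by f(x) = tr(x^{2^r + 3}), and let K = {x ∈ F : x^{2^r} = x} be the subfield of F with 2^r elements. For every a ∈ F with a ≠ 0: if a ∈ K and a = c³ for some c ∈ K (a is a nonzero cube in K), then the linear kernel E_{D_a f} has cardinality 2^{r+2}; if a ∈ K and a is not a cube of an element of K, then E_{D_a f} has cardinality 2^r; if a ∉ K, then E_{D_a f} has cardinality 4. -/

import Mathlib

noncomputable section

/-- `Fq n` is the finite field with `2 ^ n` elements. -/
abbrev Fq (n : ℕ) : Type := GaloisField 2 n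

/-- The absolute trace map `tr x = x + x^2 + x^4 + ⋯ + x^(2^(n-1))` from `Fq n` to `𝔽₂`. -/
def tr {n : ℕ} (x : Fq n) : ZMod 2 := Algebra.trace (ZMod 2) (Fq n) x

/-- The derivative of `f` with respect to `a`. -/
def der {n : ℕ} (f : Fq n → ZMod 2) (a : Fq n) : Fq n → ZMod 2 :=
  fun x => f x + f (x + a)

/-- Iterated derivatives along a list of directions (head applied last/outermost). -/
def derIter {n : ℕ} (f : Fq n → ZMod 2) : List (Fq n) → (Fq n → ZMod 2)
  | [] => f
  | a :: as => der (derIter f as) a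

/-- `g` has algebraic degree at most `r`: all `(r+1)`-th order derivatives vanish. -/
def degLE {n : ℕ} (g : Fq n → ZMod 2) (r : ℕ) : Prop :=
  ∀ l : List (Fq n), l.length = r + 1 → derIter g l = fun _ => 0

/-- Hamming distance between two Boolean functions on `Fq n`. -/
def hdist {n : ℕ} (f g : Fq n → ZMod 2) : ℕ :=
  {x : Fq n | f x ≠ g x}.ncard

/-- The `r`-th order nonlinearity of `f`. -/
def nl {n : ℕ} (r : ℕ) (f : Fq n → ZMod 2) : ℕ :=
  sInf {d : ℕ | ∃ g : Fq n → ZMod 2, degLE g r ∧ d = hdist f g}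

/-- The linear kernel of `f`: directions along which the derivative is constant. -/
def linKer {n : ℕ} (f : Fq n → ZMod 2) : Set (Fq n) :=
  {b | ∃ c : ZMod 2, ∀ x, der f b x = c}

/-- The weight of a Boolean function on `Fq n`. -/
def wt {n : ℕ} (f : Fq n → ZMod 2) : ℕ := {x : Fq n | f x = 1}.ncard

/-!
Let `σ` be the involution `x ↦ x ^ (2 ^ r)`, with fixed field `K`. The function `tr (σ x * x ^ 3)`
is cubic, so its second derivative in directions `a`, `b` is affine in `x`. Invariance of the trace
under `σ` and under squaring puts its linear part in the form `tr (x ^ 2 * L b)` with `L`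
linearized, so the linear kernel of the first derivative is `ker L`.

Write `A = a + σ a` and `B = b + σ b`. If `a ∈ K`, then `L b = a * B * (a * B ^ 3 + 1)`. As `b ↦ B`
is a `K`-linear map onto `K` with kernel `K`, the size of `ker L` is `|K|` times the number of roots
`B ∈ K`, namely `0` and the inverses of the cube roots of `a`. If `a ∉ K`, then
`L b + σ (L b) = (A * B * (A + B)) ^ 2`, so a zero `b` of `L` has `b ∈ K` or `a + b ∈ K`; since
`L a = 0`, it suffices to find the zeros in `K`, and these are `0` and `(A ^ 3)⁻¹`.
-/

theorem ncard_pow_eq_pow {K : Type*} [Field K] [Finite K] {c : K} (hc : c ≠ 0) {d : ℕ}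
    (hd : d ≠ 0) : {y : K | y ^ d = c ^ d}.ncard = (Nat.card K - 1).gcd d := by
  have image_ker : {y : K | y ^ d = c ^ d}
      = (fun u : Kˣ => c * u) '' ((powMonoidHom d : Kˣ →* Kˣ).ker : Set Kˣ) := by
    ext y
    constructor
    · intro (hy : y ^ d = c ^ d)
      have hy0 : y ≠ 0 := by
        rintro rfl
        exact pow_ne_zero d hc (hy.symm.trans (zero_pow hd))
      refine ⟨Units.mk0 (y / c) (div_ne_zero hy0 hc), Units.ext ?_, mul_div_cancel₀ y hc⟩
      simp [div_pow, hy, hc]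
    · rintro ⟨u, hu, rfl⟩
      have hu' : (u : K) ^ d = 1 := congrArg Units.val hu
      simp [mul_pow, hu']
  have mul_injective : Function.Injective fun u : Kˣ => c * u :=
    (mul_right_injective₀ hc).comp Units.val_injective
  rw [image_ker, Set.ncard_image_of_injective _ mul_injective, ← Nat.card_units K,
    ← IsCyclic.card_powMonoidHom_ker]
  rfl

theorem ncard_preimage_of_surjective {G H : Type*} [AddGroup G] [AddGroup H] {φ : G →+ H}
    (hφ : Function.Surjective φ) (S : Set H) :
    (φ ⁻¹' S).ncard = S.ncard * Nat.card φ.ker := by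
  let e := QuotientAddGroup.quotientKerEquivOfSurjective φ hφ
  calc (φ ⁻¹' S).ncard
      = Nat.card (φ.ker × (e ⁻¹' S)) :=
        Nat.card_congr (QuotientAddGroup.preimageMkEquivAddSubgroupProdSet φ.ker (e ⁻¹' S))
    _ = (e ⁻¹' S).ncard * Nat.card φ.ker := by rw [Nat.card_prod, mul_comm, Nat.card_coe_set_eq]
    _ = S.ncard * Nat.card φ.ker := by
        rw [Set.ncard_preimage_of_injective_subset_range e.injective
          (by simp [e.surjective.range_eq])]

section Involution

variable {F : Type*} [Field F]

/-- The subfield `K` of elements fixed by an endomorphism `σ` of a field. -/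
abbrev fixedSubfield (σ : F →+* F) : Subfield F := σ.eqLocusField (RingHom.id F)

variable {σ : F →+* F}

/-- The relative trace `x ↦ x + σ x` of an involution `σ` onto its fixed field, as a linear
functional over that field. -/
def relTrace (hσ : Function.Involutive σ) : F →ₗ[fixedSubfield σ] fixedSubfield σ where
  toFun x := ⟨x + σ x, by simp [RingHom.mem_eqLocusField, hσ x, add_comm]⟩
  map_add' x y := Subtype.ext <| by simp [add_add_add_comm]
  map_smul' c x := Subtype.ext <| by
    have hc : σ c = c := c.2
    simp [Subfield.smul_def, hc, mul_add]

theorem coe_relTrace (hσ : Function.Involutive σ) (x : F) : (relTrace hσ x : F) = x + σ x := rfl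

theorem map_inv_add_map_pow (hσ : Function.Involutive σ) (a : F) (k : ℕ) :
    σ ((a + σ a) ^ k)⁻¹ = ((a + σ a) ^ k)⁻¹ := by
  simp [hσ a, add_comm]

variable [CharP F 2]

theorem relTrace_eq_zero (hσ : Function.Involutive σ) {x : F} : relTrace hσ x = 0 ↔ σ x = x := by
  rw [← ZeroMemClass.coe_eq_zero, coe_relTrace, CharTwo.add_eq_zero, eq_comm]

theorem relTrace_surjective (hσ : Function.Involutive σ) (hσ1 : σ ≠ RingHom.id F) :
    Function.Surjective (relTrace hσ) :=
  LinearMap.surjective fun h =>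
    hσ1 (RingHom.ext fun x => (relTrace_eq_zero hσ).1 (LinearMap.congr_fun h x))

theorem ncard_preimage_relTrace (hσ : Function.Involutive σ) (hσ1 : σ ≠ RingHom.id F)
    (S : Set (fixedSubfield σ)) :
    (relTrace hσ ⁻¹' S).ncard = S.ncard * Nat.card (fixedSubfield σ) := by
  have card_ker : Nat.card (relTrace hσ).toAddMonoidHom.ker = Nat.card (fixedSubfield σ) :=
    Nat.card_congr (Equiv.subtypeEquivRight fun _ => relTrace_eq_zero hσ)
  rw [← card_ker]
  exact ncard_preimage_of_surjective (φ := (relTrace hσ).toAddMonoidHom)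
    (relTrace_surjective hσ hσ1) S

theorem card_fixedSubfield_mul_self (hσ : Function.Involutive σ) (hσ1 : σ ≠ RingHom.id F) :
    Nat.card (fixedSubfield σ) * Nat.card (fixedSubfield σ) = Nat.card F := by
  simpa [Set.ncard_univ] using (ncard_preimage_relTrace hσ hσ1 Set.univ).symm

/-- The linearized polynomial in `b` whose zeros are the linear kernel of the derivative in
direction `a` of the cubic function `x ↦ tr (σ x * x ^ 3)`, bundled as an additive map. -/
def kernelMap (σ : F →+* F) (a : F) : F →+ F :=
  AddMonoidHom.mk'
    (fun b => (σ b * (a + σ a) ^ 2 + σ a * (b + σ b) ^ 2) ^ 2 + (a * σ b + b * σ a)) fun b c => by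
      simp only [map_add, CharTwo.add_sq, mul_add, add_mul, mul_pow]
      ring

theorem kernelMap_apply (σ : F →+* F) (a b : F) :
    kernelMap σ a b = (σ b * (a + σ a) ^ 2 + σ a * (b + σ b) ^ 2) ^ 2 + (a * σ b + b * σ a) := rfl

theorem kernelMap_of_fixed_left {a : F} (ha : σ a = a) (b : F) :
    kernelMap σ a b = a * ((b + σ b) * (a * (b + σ b) ^ 3 + 1)) := by
  rw [kernelMap_apply, ha, CharTwo.add_self_eq_zero]
  ring

theorem kernelMap_of_fixed_right (a : F) {b : F} (hb : σ b = b) :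
    kernelMap σ a b = (a + σ a) * (b * (b * (a + σ a) ^ 3 + 1)) := by
  rw [kernelMap_apply, hb, CharTwo.add_self_eq_zero]
  ring

theorem kernelMap_self (σ : F →+* F) (a : F) : kernelMap σ a a = 0 := by
  simp [kernelMap_apply, CharTwo.add_self_eq_zero]

theorem kernelMap_add_map (hσ : Function.Involutive σ) (a b : F) :
    kernelMap σ a b + σ (kernelMap σ a b)
      = ((a + σ a) * (b + σ b) * ((a + σ a) + (b + σ b))) ^ 2 := by
  have sum_of_squared_parts :
      (σ b * (a + σ a) ^ 2 + σ a * (b + σ b) ^ 2) + (b * (a + σ a) ^ 2 + a * (b + σ b) ^ 2)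
        = (a + σ a) * (b + σ b) * ((a + σ a) + (b + σ b)) := by ring
  rw [← sum_of_squared_parts, CharTwo.add_sq]
  simp only [kernelMap_apply, map_add, map_mul, map_pow, hσ a, hσ b]
  linear_combination (a * σ b + b * σ a) * CharTwo.two_eq_zero (R := F)

theorem ker_kernelMap_of_fixed (hσ : Function.Involutive σ) {a : fixedSubfield σ} (ha : a ≠ 0) :
    ((kernelMap σ (a : F)).ker : Set F)
      = relTrace hσ ⁻¹' insert 0 {y : fixedSubfield σ | a * y ^ 3 = 1} := by
  ext b
  have ha0 : (a : F) ≠ 0 := by simpa using ha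
  simp [kernelMap_of_fixed_left a.2, ha0, Subtype.ext_iff, coe_relTrace, CharTwo.add_eq_zero]

theorem ncard_ker_kernelMap_of_cube [Finite F] (hσ : Function.Involutive σ)
    (hσ1 : σ ≠ RingHom.id F) {c : fixedSubfield σ} (hc : c ≠ 0) :
    ((kernelMap σ ((c ^ 3 : fixedSubfield σ) : F)).ker : Set F).ncard
      = ((Nat.card (fixedSubfield σ) - 1).gcd 3 + 1) * Nat.card (fixedSubfield σ) := by
  have inv_root (y : fixedSubfield σ) : c ^ 3 * y ^ 3 = 1 ↔ y ^ 3 = c⁻¹ ^ 3 := by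
    rw [mul_comm, inv_pow, mul_eq_one_iff_eq_inv₀ (pow_ne_zero 3 hc)]
  rw [ker_kernelMap_of_fixed hσ (pow_ne_zero 3 hc), ncard_preimage_relTrace hσ hσ1,
    Set.ncard_insert_of_notMem (by simp)]
  simp only [inv_root, ncard_pow_eq_pow (inv_ne_zero hc) three_ne_zero]

theorem ncard_ker_kernelMap_of_not_cube (hσ : Function.Involutive σ)
    (hσ1 : σ ≠ RingHom.id F) {a : fixedSubfield σ} (ha : ∀ c, c ^ 3 ≠ a) :
    ((kernelMap σ (a : F)).ker : Set F).ncard = Nat.card (fixedSubfield σ) := by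
  have ha0 : a ≠ 0 := fun h => ha 0 (by simp [h])
  have no_root : {y : fixedSubfield σ | a * y ^ 3 = 1} = ∅ :=
    Set.eq_empty_of_forall_notMem fun y hy =>
      ha y⁻¹ ((inv_pow y 3).trans (eq_inv_of_mul_eq_one_left hy).symm)
  rw [ker_kernelMap_of_fixed hσ ha0, no_root, insert_empty_eq, ncard_preimage_relTrace hσ hσ1,
    Set.ncard_singleton, one_mul]

theorem add_map_ne_zero {a : F} (ha : σ a ≠ a) : a + σ a ≠ 0 :=
  fun h => ha (CharTwo.add_eq_zero.1 h).symm

theorem kernelMap_eq_zero_iff_of_fixed {a b : F} (ha : σ a ≠ a) (hb : σ b = b) :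
    kernelMap σ a b = 0 ↔ b = 0 ∨ b = ((a + σ a) ^ 3)⁻¹ := by
  have hA : a + σ a ≠ 0 := add_map_ne_zero ha
  rw [kernelMap_of_fixed_right a hb, mul_eq_zero, mul_eq_zero, or_iff_right hA, CharTwo.add_eq_zero,
    mul_eq_one_iff_eq_inv₀ (pow_ne_zero 3 hA)]

theorem fixed_or_fixed_add_of_kernelMap_eq_zero (hσ : Function.Involutive σ) {a b : F}
    (ha : σ a ≠ a) (hb : kernelMap σ a b = 0) : σ b = b ∨ σ (a + b) = a + b := by
  have h : (a + σ a) * (b + σ b) * ((a + b) + σ (a + b)) = 0 := by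
    rw [map_add, add_add_add_comm, ← pow_eq_zero_iff two_ne_zero, ← kernelMap_add_map hσ, hb,
      map_zero, add_zero]
  simpa only [mul_eq_zero, CharTwo.add_eq_zero, ha.symm, false_or, eq_comm (b := σ _)] using h

theorem ker_kernelMap_of_not_fixed (hσ : Function.Involutive σ) {a : F} (ha : σ a ≠ a) :
    ((kernelMap σ a).ker : Set F)
      = {0, ((a + σ a) ^ 3)⁻¹, a, a + ((a + σ a) ^ 3)⁻¹} := by
  have hv := map_inv_add_map_pow hσ a 3
  have v_root := (kernelMap_eq_zero_iff_of_fixed ha hv).2 (Or.inr rfl)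
  ext b
  constructor
  · intro (hb : kernelMap σ a b = 0)
    rcases fixed_or_fixed_add_of_kernelMap_eq_zero hσ ha hb with hfix | hfix
    · rcases (kernelMap_eq_zero_iff_of_fixed ha hfix).1 hb with h | h <;> simp [h]
    · have hab : kernelMap σ a (a + b) = 0 := by rw [map_add, kernelMap_self, hb, add_zero]
      have b_eq : b = a + (a + b) := (CharTwo.add_cancel_left a b).symm
      rcases (kernelMap_eq_zero_iff_of_fixed ha hfix).1 hab with h | h <;>
        rw [b_eq, h] <;> simp
  · rintro (rfl | rfl | rfl | rfl) <;> simp [kernelMap_self, v_root]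

theorem ncard_ker_kernelMap_of_not_fixed (hσ : Function.Involutive σ) {a : F} (ha : σ a ≠ a) :
    ((kernelMap σ a).ker : Set F).ncard = 4 := by
  have hv := map_inv_add_map_pow hσ a 3
  have hv0 : ((a + σ a) ^ 3)⁻¹ ≠ 0 := inv_ne_zero (pow_ne_zero 3 (add_map_ne_zero ha))
  have ha0 : a ≠ 0 := by rintro rfl; exact ha (map_zero σ)
  rw [ker_kernelMap_of_not_fixed hσ ha]
  generalize ((a + σ a) ^ 3)⁻¹ = v at hv hv0
  have hva : v ≠ a := by rintro rfl; exact ha hv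
  have hav : a + v ≠ 0 := fun h => hva (CharTwo.add_eq_zero.1 h).symm
  repeat rw [Set.ncard_insert_of_notMem]
  all_goals simp [hv0, ha0, hva, hv0.symm, ha0.symm, hav.symm]

end Involution

section Trace

variable {n : ℕ}

theorem tr_add (x y : Fq n) : tr (x + y) = tr x + tr y := map_add _ x y

theorem tr_ringHom_apply (σ : Fq n →+* Fq n) (x : Fq n) : tr (σ x) = tr x := by
  let e : Fq n ≃+* Fq n := RingEquiv.ofBijective σ (Finite.injective_iff_bijective.1 σ.injective)
  have commutes : ∀ c : ZMod 2, e (algebraMap (ZMod 2) (Fq n) c) = algebraMap (ZMod 2) (Fq n) c :=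
    RingHom.congr_fun (RingHom.ext_zmod (e.toRingHom.comp (algebraMap _ _)) (algebraMap _ _))
  exact Algebra.trace_eq_of_algEquiv (AlgEquiv.ofRingEquiv commutes) x

theorem tr_sq (x : Fq n) : tr (x ^ 2) = tr x := tr_ringHom_apply (frobenius (Fq n) 2) x

theorem eq_zero_of_forall_tr_sq_mul_eq_zero {c : Fq n} (h : ∀ x, tr (x ^ 2 * c) = 0) : c = 0 := by
  refine (traceForm_nondegenerate (ZMod 2) (Fq n)).1 c fun y => ?_
  obtain ⟨x, rfl⟩ := (bijective_frobenius (Fq n) 2).surjective y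
  rw [Algebra.traceForm_apply, mul_comm]
  exact h x

theorem mem_linKer_iff {g : Fq n → ZMod 2} {b : Fq n} :
    b ∈ linKer g ↔ ∀ x, der g b x + der g b 0 = 0 := by
  simp only [CharTwo.add_eq_zero]
  exact ⟨fun ⟨_, hc⟩ x => (hc x).trans (hc 0).symm, fun h => ⟨_, h⟩⟩

/-- The cubic Boolean function `x ↦ tr (σ x * x ^ 3)`; it is `x ↦ tr (x ^ (2 ^ r + 3))` when `σ` is
the `r`-th power of Frobenius. -/
def trCubic (σ : Fq n →+* Fq n) (x : Fq n) : ZMod 2 := tr (σ x * x ^ 3)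

theorem der_der_trCubic_add_der_der_zero (σ : Fq n →+* Fq n) (a b x : Fq n) :
    der (der (trCubic σ) a) b x + der (der (trCubic σ) a) b 0
      = tr (σ x * (a ^ 2 * b + b ^ 2 * a) + x * (a ^ 2 * σ b + b ^ 2 * σ a)
          + x ^ 2 * (a * σ b + b * σ a)) := by
  simp only [der, trCubic, ← tr_add]
  congr 1
  simp only [map_add, map_zero]
  -- Summing `t ↦ σ t * t * t ^ 2` over the subset sums of `{x, a, b}` polarizes it: what remains is
  -- the sum of `σ u * v * w ^ 2` over the permutations `(u, v, w)` of `(x, a, b)`.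
  grind

theorem der_der_trCubic_add_der_der_zero_eq_tr_kernelMap {σ : Fq n →+* Fq n}
    (hσ : Function.Involutive σ) (a b x : Fq n) :
    der (der (trCubic σ) a) b x + der (der (trCubic σ) a) b 0
      = tr (x ^ 2 * kernelMap σ a b) := by
  rw [der_der_trCubic_add_der_der_zero]
  calc tr (σ x * (a ^ 2 * b + b ^ 2 * a) + x * (a ^ 2 * σ b + b ^ 2 * σ a)
          + x ^ 2 * (a * σ b + b * σ a))
      = tr (x * σ (a ^ 2 * b + b ^ 2 * a)) + tr (x * (a ^ 2 * σ b + b ^ 2 * σ a))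
          + tr (x ^ 2 * (a * σ b + b * σ a)) := by
        rw [tr_add, tr_add, ← tr_ringHom_apply σ (σ x * _), map_mul, hσ x]
    _ = tr (x * (σ b * (a + σ a) ^ 2 + σ a * (b + σ b) ^ 2))
          + tr (x ^ 2 * (a * σ b + b * σ a)) := by
        rw [← tr_add, ← mul_add]
        congr 3
        simp only [map_add, map_mul, map_pow, CharTwo.add_sq]
        ring
    _ = tr (x ^ 2 * kernelMap σ a b) := by
        rw [← tr_sq (x * _), ← tr_add, mul_pow, ← mul_add, kernelMap_apply]

theorem linKer_der_trCubic {σ : Fq n →+* Fq n} (hσ : Function.Involutive σ) (a : Fq n) :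
    linKer (der (trCubic σ) a) = ((kernelMap σ a).ker : Set (Fq n)) := by
  ext b
  simp only [mem_linKer_iff, der_der_trCubic_add_der_der_zero_eq_tr_kernelMap hσ, SetLike.mem_coe,
    AddMonoidHom.mem_ker]
  exact ⟨eq_zero_of_forall_tr_sq_mul_eq_zero, fun h x => by rw [h, mul_zero]; exact map_zero _⟩

end Trace

section Frobenius

theorem iterateFrobenius_eq_id_iff {n : ℕ} (hn : n ≠ 0) (k : ℕ) :
    iterateFrobenius (Fq n) 2 k = RingHom.id (Fq n) ↔ n ∣ k := by
  let φ := FiniteField.frobeniusAlgHom (ZMod 2) (Fq n)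
  have φ_pow (x : Fq n) : (φ ^ k) x = iterateFrobenius (Fq n) 2 k x := by
    simp [φ, AlgHom.coe_pow, FiniteField.coe_frobeniusAlgHom, pow_iterate, iterateFrobenius_def]
  have orderOf_φ : orderOf φ = n := by
    rw [FiniteField.orderOf_frobeniusAlgHom, GaloisField.finrank 2 hn]
  calc iterateFrobenius (Fq n) 2 k = RingHom.id (Fq n)
      ↔ φ ^ k = 1 := by
        simp only [AlgHom.ext_iff, RingHom.ext_iff, φ_pow, RingHom.id_apply, AlgHom.one_apply]
    _ ↔ n ∣ k := by rw [← orderOf_dvd_iff_pow_eq_one, orderOf_φ]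

variable {r : ℕ}

theorem involutive_iterateFrobenius (hr : r ≠ 0) :
    Function.Involutive (iterateFrobenius (Fq (2 * r)) 2 r) := fun x => by
  rw [← iterateFrobenius_add_apply, ← two_mul,
    (iterateFrobenius_eq_id_iff (by lia) _).2 dvd_rfl, RingHom.id_apply]

theorem iterateFrobenius_ne_id (hr : r ≠ 0) :
    iterateFrobenius (Fq (2 * r)) 2 r ≠ RingHom.id (Fq (2 * r)) := fun h => by
  have hdvd : 2 * r ∣ r := (iterateFrobenius_eq_id_iff (by lia) r).1 h
  have := Nat.le_of_dvd (Nat.pos_of_ne_zero hr) hdvd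
  lia

theorem card_fixedSubfield_iterateFrobenius (hr : r ≠ 0) :
    Nat.card (fixedSubfield (iterateFrobenius (Fq (2 * r)) 2 r)) = 2 ^ r := by
  rw [← Nat.mul_self_inj, card_fixedSubfield_mul_self (involutive_iterateFrobenius hr)
    (iterateFrobenius_ne_id hr), GaloisField.card 2 (2 * r) (by lia), two_mul, pow_add]

end Frobenius

theorem linKer_card_der_even_r_general (r n : ℕ) (hr : 0 < r) (hn : n = 2 * r)
    (f : Fq n → ZMod 2) (hf : ∀ x, f x = tr (x ^ (2 ^ r + 3))) :
    ∀ a : Fq n, a ≠ 0 →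
      (a ^ (2 ^ r) = a → (∃ c : Fq n, c ^ (2 ^ r) = c ∧ c ^ 3 = a) →
        (linKer (der f a)).ncard = ((2 ^ r - 1).gcd 3 + 1) * 2 ^ r) ∧
      (a ^ (2 ^ r) = a → ¬ (∃ c : Fq n, c ^ (2 ^ r) = c ∧ c ^ 3 = a) →
        (linKer (der f a)).ncard = 2 ^ r) ∧
      (a ^ (2 ^ r) ≠ a → (linKer (der f a)).ncard = 4) := by
  subst hn
  let σ := iterateFrobenius (Fq (2 * r)) 2 r
  have hσ : Function.Involutive σ := involutive_iterateFrobenius hr.ne'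
  have hσ1 : σ ≠ RingHom.id _ := iterateFrobenius_ne_id hr.ne'
  have card_fixed : Nat.card (fixedSubfield σ) = 2 ^ r := card_fixedSubfield_iterateFrobenius hr.ne'
  have pow_eq (x) : x ^ 2 ^ r = σ x := (iterateFrobenius_def 2 r x).symm
  obtain rfl : f = trCubic σ := funext fun x => by rw [hf, pow_add, pow_eq, trCubic]
  intro a ha
  simp only [linKer_der_trCubic hσ, pow_eq]
  refine ⟨?_, fun ha_fixed ha_cube => ?_, ncard_ker_kernelMap_of_not_fixed hσ⟩
  · rintro - ⟨c, hc, rfl⟩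
    lift c to fixedSubfield σ using hc
    have hc0 : c ≠ 0 := by rintro rfl; simp at ha
    rw [← card_fixed, ← ncard_ker_kernelMap_of_cube hσ hσ1 hc0]
    rfl
  · lift a to fixedSubfield σ using ha_fixed
    rw [← card_fixed]
    exact ncard_ker_kernelMap_of_not_cube hσ hσ1 fun c hc =>
      ha_cube ⟨c, c.2, congrArg Subtype.val hc⟩

theorem gcd_two_pow_sub_one_three {r : ℕ} (hr : Even r) : (2 ^ r - 1).gcd 3 = 3 := by
  obtain ⟨m, rfl⟩ := hr
  refine Nat.gcd_eq_right ?_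
  simpa [← two_mul, pow_mul] using Nat.sub_dvd_pow_sub_pow 4 1 m

/-- Linear-kernel sizes for derivatives of `tr(x^(2^r+3))`, `n = 2r`, even `r`. -/
theorem linKer_card_der_even_r (r n : ℕ) (hr : 0 < r) (hreven : Even r) (hn : n = 2 * r)
    (f : Fq n → ZMod 2) (hf : ∀ x, f x = tr (x ^ (2 ^ r + 3))) :
    ∀ a : Fq n, a ≠ 0 →
      (a ^ (2 ^ r) = a → (∃ c : Fq n, c ^ (2 ^ r) = c ∧ c ^ 3 = a) →
        (linKer (der f a)).ncard = 2 ^ (r + 2)) ∧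
      (a ^ (2 ^ r) = a → ¬ (∃ c : Fq n, c ^ (2 ^ r) = c ∧ c ^ 3 = a) →
        (linKer (der f a)).ncard = 2 ^ r) ∧
      (a ^ (2 ^ r) ≠ a → (linKer (der f a)).ncard = 4) := by
  have h := linKer_card_der_even_r_general r n hr hn f hf
  rwa [gcd_two_pow_sub_one_three hreven, show (3 + 1) * 2 ^ r = 2 ^ (r + 2) by ring] at h
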